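/- Let n ≥ 3, let D be a rich domain, and let f : D^n → M be an efficient, individually rational and obviously strategy-proof rule satisfying equity under unanimous acclaim. Fix two distinct objects o_j, o_k ∈ O that are connected in D (o_j ∼ o_k), and let o_i ∈ O \ {o_j, o_k}. Then →(o_i, o_j, o_k) ∈ R(D) or →(o_i, o_k, o_j) ∈ R(D). -/

import Mathlib

/-!
Suppose both restrictions fail at `a = o_i`, `b = o_j`, `c = o_k`. Then the domain contains
preferences whose restrictions to `{a, b, c}` are `a c b` and `a b c`, and connectedness of
`b` and `c` supplies `b c a` and `c b a`. Every object is on top of some preference of the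
domain, so all other agents can be made null, which leaves an exchange among `a`, `b`, `c` only.

Consider the box of profiles in which agent `a` reports `b c a` or `c b a`, agent `b` reports
`a c b` or `c b a`, and agent `c` reports `a b c` or `b c a`.
* At `(b c a, a c b, a b c)` agent `a` is acclaimed and receives `b`, and strategy-proofness gives
  `a` to agent `b`, so agent `c` keeps `c`; at `(c b a, a c b, a b c)` the roles of `b` and `c`
  are exchanged (`acclaimed_outcome`).
* At `(b c a, c b a, b c a)` efficiency and individual rationality force `b` and `c` to trade, and
  agent `a` keeps `a` (`trade_outcome`).

Hence each of the three agents has a report with an outcome in the box that is strictly worse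
than some outcome attained in the box through the other report. Obvious dominance then forbids
any of them to be the first one to separate the two reports, so the play, and with it `f`, is
constant on the box (`osp_constant_on_box`), although the outcomes above differ. The same principle
on a box with a single varying agent yields strategy-proofness.
-/

/-- A preference is a strict linear order on the objects `Fin n`, encoded by its
rank function: `p o < p o'` means object `o` is strictly preferred to `o'`. -/
abbrev Pref (n : ℕ) := Fin n ≃ Fin n

/-- `o` is strictly preferred to `o'` under `p`. -/
def prefers {n : ℕ} (p : Pref n) (o o' : Fin n) : Prop := p o < p o'

/-- `o` is weakly preferred to `o'` under `p` (i.e. `o P o'` or `o = o'`). -/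
def weakPref {n : ℕ} (p : Pref n) (o o' : Fin n) : Prop := p o ≤ p o'

/-- The top-ranked object `r_1(p)`. -/
def topObj {n : ℕ} [NeZero n] (p : Pref n) : Fin n := p.symm 0

/-- The second-ranked object `r_2(p)`. -/
def secondObj {n : ℕ} [NeZero n] (p : Pref n) : Fin n := p.symm 1

/-- The `p`-best object of a (nonempty) finite set `S`: `max^p S`. -/
noncomputable def best {n : ℕ} [NeZero n] (p : Pref n) (S : Finset (Fin n)) : Fin n :=
  (S.toList.argmin (fun o => p o)).getD 0

/-- A profile belongs to the domain `D` coordinatewise. -/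
def inD {n : ℕ} (D : Set (Pref n)) (P : Fin n → Pref n) : Prop := ∀ i, P i ∈ D

/-- Individual rationality of an allocation at a profile: each agent `i` weakly
prefers her assigned object to her endowment `o_i = i`. -/
def IRAt {n : ℕ} (P : Fin n → Pref n) (m : Fin n → Fin n) : Prop :=
  ∀ i, weakPref (P i) (m i) i

/-- `m'` Pareto dominates `m` at profile `P`. -/
def ParetoDom {n : ℕ} (P : Fin n → Pref n) (m' m : Fin n → Fin n) : Prop :=
  (∀ i, weakPref (P i) (m' i) (m i)) ∧ ∃ j, prefers (P j) (m' j) (m j)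

/-- Pareto efficiency of an allocation at a profile. -/
def EffAt {n : ℕ} (P : Fin n → Pref n) (m : Fin n → Fin n) : Prop :=
  ¬ ∃ m' : Fin n → Fin n, Function.Bijective m' ∧ ParetoDom P m' m

/-- A rule maps profiles from the domain to allocations (bijections `N → O`). -/
def IsRule {n : ℕ} (D : Set (Pref n)) (f : (Fin n → Pref n) → (Fin n → Fin n)) : Prop :=
  ∀ P, inD D P → Function.Bijective (f P)

def Efficient {n : ℕ} (D : Set (Pref n)) (f : (Fin n → Pref n) → (Fin n → Fin n)) : Prop :=
  ∀ P, inD D P → EffAt P (f P)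

def IndRational {n : ℕ} (D : Set (Pref n)) (f : (Fin n → Pref n) → (Fin n → Fin n)) : Prop :=
  ∀ P, inD D P → IRAt P (f P)

def StrategyProof {n : ℕ} (D : Set (Pref n)) (f : (Fin n → Pref n) → (Fin n → Fin n)) : Prop :=
  ∀ P, inD D P → ∀ i, ∀ p' ∈ D, weakPref (P i) (f P i) (f (Function.update P i p') i)

/-- The active agents at profile `P` (those whose top object differs from their
endowment); since `o_i = i`, the set of active objects coincides with it. -/
def activeAgents {n : ℕ} [NeZero n] (P : Fin n → Pref n) : Finset (Fin n) :=
  Finset.univ.filter (fun i => topObj (P i) ≠ i)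

/-- Agent `i` is the acclaimed agent at profile `P`. -/
def acclaimed {n : ℕ} [NeZero n] (P : Fin n → Pref n) (i : Fin n) : Prop :=
  2 < (activeAgents P).card ∧ i ∈ activeAgents P ∧
    best (P i) (activeAgents P) ≠ i ∧
    ∀ j ∈ activeAgents P, j ≠ i → best (P j) (activeAgents P) = i

/-- Equity under unanimous acclaim. -/
def EquityUA {n : ℕ} [NeZero n] (D : Set (Pref n))
    (f : (Fin n → Pref n) → (Fin n → Fin n)) : Prop :=
  ∀ P, inD D P → ∀ i, acclaimed P i → f P i = best (P i) (activeAgents P)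

/-- Agents `i` and `j` form the acclaimed pair at profile `P`. -/
def acclaimedPair {n : ℕ} [NeZero n] (P : Fin n → Pref n) (i j : Fin n) : Prop :=
  ∃ Ni Nj : Finset (Fin n),
    Disjoint Ni Nj ∧ Ni ∪ Nj = activeAgents P ∧ Ni.card = Nj.card ∧ 1 < Ni.card ∧
    i ∈ Nj ∧ j ∈ Ni ∧
    (∀ l ∈ Ni, best (P l) (activeAgents P) = i) ∧
    (∀ l ∈ Nj, best (P l) (activeAgents P) = j)

/-- Equity under bipartite acclaim. -/
def EquityBA {n : ℕ} [NeZero n] (D : Set (Pref n))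
    (f : (Fin n → Pref n) → (Fin n → Fin n)) : Prop :=
  ∀ P, inD D P → ∀ i j, acclaimedPair P i j → f P i = j ∨ f P j = i

/-- Equity⁺ under bipartite acclaim. -/
def EquityPlusBA {n : ℕ} [NeZero n] (D : Set (Pref n))
    (f : (Fin n → Pref n) → (Fin n → Fin n)) : Prop :=
  ∀ P, inD D P → ∀ i j, acclaimedPair P i j → f P i = j ∧ f P j = i

/-- Single-peakedness of `p` w.r.t. the linear order on objects encoded by the
position permutation `σ` (`o < o'` iff `σ o < σ o'`). -/
def singlePeaked {n : ℕ} [NeZero n] (σ : Fin n ≃ Fin n) (p : Pref n) : Prop :=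
  ∀ o o' : Fin n,
    ((σ o' < σ o ∧ σ o < σ (topObj p)) ∨ (σ (topObj p) < σ o ∧ σ o < σ o')) →
    prefers p o o'

/-- The full single-peaked domain `D_<`. -/
def spDomain {n : ℕ} [NeZero n] (σ : Fin n ≃ Fin n) : Set (Pref n) :=
  {p | singlePeaked σ p}

/-- `D` is a single-peaked domain. -/
def IsSPDomain {n : ℕ} [NeZero n] (D : Set (Pref n)) : Prop :=
  ∃ σ : Fin n ≃ Fin n, D ⊆ spDomain σ

/-- Objects `o` and `o'` are connected in `D`: `o ∼ o'`. -/
def connectedObj {n : ℕ} [NeZero n] (D : Set (Pref n)) (o o' : Fin n) : Prop :=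
  ∃ p ∈ D, ∃ p' ∈ D, topObj p = o ∧ secondObj p = o' ∧ topObj p' = o' ∧ secondObj p' = o

/-- `D` is path-connected. -/
def pathConnected {n : ℕ} [NeZero n] (D : Set (Pref n)) : Prop :=
  ∀ o o' : Fin n, o ≠ o' → ∃ l : List (Fin n),
    l.Nodup ∧ l.head? = some o ∧ l.getLast? = some o' ∧ l.Chain' (connectedObj D)

/-- `p` and `p'` rank all objects in exactly opposite orders. -/
def reversedPair {n : ℕ} (p p' : Pref n) : Prop :=
  ∀ o o', prefers p o o' ↔ prefers p' o' o

/-- A rich domain: path-connected and containing two completely reversed preferences. -/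
def richDomain {n : ℕ} [NeZero n] (D : Set (Pref n)) : Prop :=
  pathConnected D ∧ ∃ p ∈ D, ∃ p' ∈ D, reversedPair p p'

/-- The restriction `→(x,y,z) ∈ R(D)`: whenever `x` is the best of `{x,y,z}`,
`y` is ranked above `z`. -/
def RestrR {n : ℕ} [NeZero n] (D : Set (Pref n)) (x y z : Fin n) : Prop :=
  ∀ p ∈ D, best p {x, y, z} = x → prefers p y z

/-- The ternary relation `(x,y,z) ∈ B(D)`. -/
def RelB {n : ℕ} [NeZero n] (D : Set (Pref n)) (x y z : Fin n) : Prop :=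
  RestrR D x y z ∧ RestrR D z y x

/-! ### Extensive game forms and obvious strategy-proofness -/

/-- An extensive game form: a finite rooted tree of histories (lists of actions,
prefix-closed), a player function and an outcome function on terminal histories. -/
structure GameForm (n : ℕ) where
  hist : Finset (List ℕ)
  root_mem : [] ∈ hist
  prefix_closed : ∀ h a, h ++ [a] ∈ hist → h ∈ hist
  player : List ℕ → Fin n
  outcome : List ℕ → (Fin n → Fin n)

/-- A strategy chooses an action at every history. -/
abbrev Strategy : Type := List ℕ → ℕ

/-- Terminal histories of the game form. -/
def GameForm.Terminal {n : ℕ} (Γ : GameForm n) (h : List ℕ) : Prop :=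
  h ∈ Γ.hist ∧ ∀ a, h ++ [a] ∉ Γ.hist

/-- A strategy of agent `i` is valid if it always chooses a feasible action. -/
def GameForm.ValidStrat {n : ℕ} (Γ : GameForm n) (i : Fin n) (s : Strategy) : Prop :=
  ∀ h ∈ Γ.hist, ¬ Γ.Terminal h → Γ.player h = i → h ++ [s h] ∈ Γ.hist

/-- Play from `h` under the strategy profile `s` reaches history `h'`. -/
inductive GameForm.Reaches {n : ℕ} (Γ : GameForm n) (s : Fin n → Strategy) :
    List ℕ → List ℕ → Prop
  | refl (h : List ℕ) : GameForm.Reaches Γ s h h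
  | step {h h' : List ℕ} : GameForm.Reaches Γ s h h' → h' ∈ Γ.hist → ¬ Γ.Terminal h' →
      GameForm.Reaches Γ s h (h' ++ [s (Γ.player h') h'])

/-- `o` belongs to the feasible set `X_i(h, s_i)` of agent `i` at history `h`
given her strategy `si`. -/
def GameForm.Feas {n : ℕ} (Γ : GameForm n) (i : Fin n) (h : List ℕ) (si : Strategy)
    (o : Fin n) : Prop :=
  ∃ s : Fin n → Strategy, (∀ j, Γ.ValidStrat j (s j)) ∧ s i = si ∧
    ∃ t, Γ.Reaches s h t ∧ Γ.Terminal t ∧ Γ.outcome t i = o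

/-- `h` is a decision node of `i` reachable (on-path) when `i` plays `si`. -/
def GameForm.ReachableNode {n : ℕ} (Γ : GameForm n) (i : Fin n) (si : Strategy)
    (h : List ℕ) : Prop :=
  h ∈ Γ.hist ∧ ¬ Γ.Terminal h ∧ Γ.player h = i ∧
    ∃ s : Fin n → Strategy, (∀ j, Γ.ValidStrat j (s j)) ∧ s i = si ∧ Γ.Reaches s [] h

/-- `si` obviously dominates `si'` at preference `p`: at every earliest point of
departure, the worst feasible outcome under `si` is weakly preferred to the best
feasible outcome under `si'`. -/
def GameForm.ObvDom {n : ℕ} (Γ : GameForm n) (i : Fin n) (p : Pref n)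
    (si si' : Strategy) : Prop :=
  ∀ h, Γ.ReachableNode i si h → Γ.ReachableNode i si' h → si h ≠ si' h →
    ∀ o o', Γ.Feas i h si o → Γ.Feas i h si' o' → weakPref p o o'

/-- Obvious strategy-proofness of a rule `f` on domain `D`. -/
def OSP {n : ℕ} (D : Set (Pref n)) (f : (Fin n → Pref n) → (Fin n → Fin n)) : Prop :=
  ∃ (Γ : GameForm n) (S : Fin n → Pref n → Strategy),
    (∀ i p, p ∈ D → Γ.ValidStrat i (S i p)) ∧
    (∀ i p, p ∈ D → ∀ s', Γ.ValidStrat i s' → Γ.ObvDom i p (S i p) s') ∧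
    (∀ P : Fin n → Pref n, inD D P →
      ∃ t, Γ.Reaches (fun j => S j (P j)) [] t ∧ Γ.Terminal t ∧ Γ.outcome t = f P)

/-! ### The crawler, the designator, and top trading cycles -/

/-- The running state of the crawler/designator algorithms: the sub-allocation of
objects currently held by remaining agents, and the final assignments so far. -/
structure AlgState (n : ℕ) where
  held : Fin n → Option (Fin n)
  res : Fin n → Option (Fin n)

/-- The object currently held by agent `i`. -/
def heldObj {n : ℕ} [NeZero n] (st : AlgState n) (i : Fin n) : Fin n := (st.held i).getD 0

/-- The remaining agents. -/
def remAgents {n : ℕ} (st : AlgState n) : Finset (Fin n) :=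
  Finset.univ.filter (fun i => (st.held i).isSome)

/-- The remaining objects. -/
def remObjs {n : ℕ} [NeZero n] (st : AlgState n) : Finset (Fin n) :=
  (remAgents st).image (heldObj st)

/-- The object of `S` adjacently larger than `o` w.r.t. the order `σ`. -/
noncomputable def adjLarger {n : ℕ} (σ : Fin n ≃ Fin n) (S : Finset (Fin n)) (o : Fin n) : Fin n :=
  ((S.filter (fun o' => σ o < σ o')).toList.argmin (fun o' => σ o')).getD o

/-- The agent `i^s` leaving at the current step: the remaining agent holding the
`σ`-smallest object among those whose best remaining object is weakly below their
held object. -/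
noncomputable def leaver {n : ℕ} [NeZero n] (σ : Fin n ≃ Fin n) (P : Fin n → Pref n)
    (st : AlgState n) : Option (Fin n) :=
  ((remAgents st).filter
      (fun i => σ (best (P i) (remObjs st)) ≤ σ (heldObj st i))).toList.argmin
    (fun i => σ (heldObj st i))

/-- One step of the crawler: the leaving agent takes her best remaining object,
and every remaining agent holding an object weakly above the taken object and
strictly below the leaver's object crawls to the adjacently larger object. -/
noncomputable def crawlerStep {n : ℕ} [NeZero n] (σ : Fin n ≃ Fin n) (P : Fin n → Pref n)
    (st : AlgState n) : AlgState n :=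
  match leaver σ P st with
  | none => st
  | some is =>
    let taken := best (P is) (remObjs st)
    { held := fun j =>
        if j = is then none
        else if (st.held j).isSome = true ∧ σ taken ≤ σ (heldObj st j) ∧
            σ (heldObj st j) < σ (heldObj st is) then
          some (adjLarger σ (remObjs st) (heldObj st j))
        else st.held j,
      res := Function.update st.res is (some taken) }

/-- Initially every agent holds her endowment `o_i = i`. -/
def crawlerInit (n : ℕ) : AlgState n := ⟨fun i => some i, fun _ => none⟩

/-- The crawler rule w.r.t. the object order `σ`. -/
noncomputable def crawler {n : ℕ} [NeZero n] (σ : Fin n ≃ Fin n) (P : Fin n → Pref n) :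
    Fin n → Fin n :=
  fun i => (((crawlerStep σ P)^[n] (crawlerInit n)).res i).getD 0

/-- `τ(i)`: the active agent whose endowment is `max^{P_i} O_{m̄⁰}`. -/
noncomputable def desTau {n : ℕ} [NeZero n] (P : Fin n → Pref n) (i : Fin n) : Fin n :=
  best (P i) (activeAgents P)

/-- Stage I of the designator: null agents receive their endowments and leave. -/
def desInit {n : ℕ} [NeZero n] (P : Fin n → Pref n) : AlgState n :=
  { held := fun i => if topObj (P i) = i then none else some i,
    res := fun i => if topObj (P i) = i then some i else none }

/-- One step of Stage II of the designator: the leaving agent `i^s` takes her best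
remaining object; if `τ(i^s)` is remaining and holds an object weakly above the
taken object and strictly below `i^s`'s held object, then `τ(i^s)` directly
inherits `i^s`'s object and only agents below `τ(i^s)` crawl (designating);
otherwise the crawling updating applies. -/
noncomputable def desStep {n : ℕ} [NeZero n] (σ : Fin n ≃ Fin n) (P : Fin n → Pref n)
    (st : AlgState n) : AlgState n :=
  match leaver σ P st with
  | none => st
  | some is =>
    let taken := best (P is) (remObjs st)
    let t := desTau P is
    if (st.held t).isSome = true ∧ σ taken ≤ σ (heldObj st t) ∧
        σ (heldObj st t) < σ (heldObj st is) then
      { held := fun j =>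
          if j = is then none
          else if j = t then some (heldObj st is)
          else if (st.held j).isSome = true ∧ σ taken ≤ σ (heldObj st j) ∧
              σ (heldObj st j) < σ (heldObj st t) then
            some (adjLarger σ (remObjs st) (heldObj st j))
          else st.held j,
        res := Function.update st.res is (some taken) }
    else
      { held := fun j =>
          if j = is then none
          else if (st.held j).isSome = true ∧ σ taken ≤ σ (heldObj st j) ∧
              σ (heldObj st j) < σ (heldObj st is) then
            some (adjLarger σ (remObjs st) (heldObj st j))
          else st.held j,
        res := Function.update st.res is (some taken) }

/-- The designator rule w.r.t. the object order `σ`. -/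
noncomputable def designator {n : ℕ} [NeZero n] (σ : Fin n ≃ Fin n) (P : Fin n → Pref n) :
    Fin n → Fin n :=
  fun i => (((desStep σ P)^[n] (desInit P)).res i).getD 0

/-- One round of top trading cycles: every remaining agent points to the owner of
her favorite remaining object (owner of object `o` is agent `o`), and every agent
lying on a pointing cycle receives the object she points to and leaves. -/
noncomputable def ttcStep {n : ℕ} [NeZero n] (P : Fin n → Pref n) (res : Fin n → Option (Fin n)) :
    Fin n → Option (Fin n) :=
  let rem : Finset (Fin n) := Finset.univ.filter (fun i => res i = none)
  let pt : Fin n → Fin n := fun i => best (P i) rem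
  fun i =>
    match res i with
    | some o => some o
    | none =>
      if (List.range (n + 1)).any (fun k => (k != 0) && (pt^[k] i == i)) then some (pt i)
      else none

/-- The top-trading-cycle rule. -/
noncomputable def ttc {n : ℕ} [NeZero n] (P : Fin n → Pref n) : Fin n → Fin n :=
  fun i => (((ttcStep P)^[n] (fun _ => none)) i).getD 0

/-! ### Plays of a game form -/

/-- A play that continues beyond `h` passes through the successor of `h`. -/
lemma reaches_head {n : ℕ} {Γ : GameForm n} {s : Fin n → Strategy} {h y : List ℕ}
    (H : Γ.Reaches s h y) :
    y = h ∨ (¬ Γ.Terminal h ∧ Γ.Reaches s (h ++ [s (Γ.player h) h]) y) := by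
  induction H with
  | refl => exact Or.inl rfl
  | step h1 h2 h3 ih =>
    rcases ih with rfl | ⟨h4, h5⟩
    · exact Or.inr ⟨h3, .refl _⟩
    · exact Or.inr ⟨h4, .step h5 h2 h3⟩

lemma reaches_trans {n : ℕ} {Γ : GameForm n} {s : Fin n → Strategy} {x y z : List ℕ}
    (H : Γ.Reaches s x y) (H' : Γ.Reaches s y z) : Γ.Reaches s x z := by
  induction H' with
  | refl => exact H
  | step _ h2 h3 ih => exact .step ih h2 h3

lemma reaches_terminal {n : ℕ} {Γ : GameForm n} {s : Fin n → Strategy} {t y : List ℕ}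
    (ht : Γ.Terminal t) (H : Γ.Reaches s t y) : y = t := by
  rcases reaches_head H with h | h
  · exact h
  · exact absurd ht h.1

/-- The play of a strategy profile is a path: two histories on it are comparable. -/
lemma reaches_total {n : ℕ} {Γ : GameForm n} {s : Fin n → Strategy} {r x y : List ℕ}
    (H : Γ.Reaches s r x) (H' : Γ.Reaches s r y) : Γ.Reaches s x y ∨ Γ.Reaches s y x := by
  induction H with
  | refl => exact Or.inl H'
  | step h1 h2 h3 ih =>
    rcases ih with h | h
    · rcases reaches_head h with rfl | h4
      · exact Or.inr (.step (.refl _) h2 h3)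
      · exact Or.inl h4.2
    · exact Or.inr (.step h h2 h3)

/-! ### Consequences of obvious strategy-proofness -/

/-- On the box `∏ {A i, B i}` suppose each agent whose two preferences differ can, with the report
`A i`, end up strictly worse (according to `A i`) than at some profile of the box where the report
is `B i`. Then no agent can separate the two reports first, so `f` is constant on the box. -/
lemma osp_constant_on_box {n : ℕ} {D : Set (Pref n)} {f : (Fin n → Pref n) → (Fin n → Fin n)}
    (hosp : OSP D f) (A B : Fin n → Pref n) (hA : inD D A) (hB : inD D B)
    (hv : ∀ i, A i = B i ∨ ∃ P P' : Fin n → Pref n,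
      (∀ j, P j = A j ∨ P j = B j) ∧ (∀ j, P' j = A j ∨ P' j = B j) ∧
      P i = A i ∧ P' i = B i ∧ prefers (A i) (f P' i) (f P i))
    (P P' : Fin n → Pref n) (hP : ∀ j, P j = A j ∨ P j = B j)
    (hP' : ∀ j, P' j = A j ∨ P' j = B j) : f P = f P' := by
  obtain ⟨Γ, S, hval, hdom, hplay⟩ := hosp
  have box : ∀ Q : Fin n → Pref n, (∀ j, Q j = A j ∨ Q j = B j) → inD D Q := by
    intro Q hQ j
    rcases hQ j with h | h
    · rw [h]; exact hA j
    · rw [h]; exact hB j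
  have feas : ∀ Q : Fin n → Pref n, (∀ j, Q j = A j ∨ Q j = B j) → ∀ i h,
      Γ.Reaches (fun j => S j (Q j)) [] h → ¬ Γ.Terminal h →
      Γ.Feas i h (S i (Q i)) (f Q i) := by
    intro Q hQ i h hr hnt
    obtain ⟨t, ht, htt, hto⟩ := hplay Q (box Q hQ)
    refine ⟨fun j => S j (Q j), fun j => hval j _ (box Q hQ j), rfl, t, ?_, htt, by rw [hto]⟩
    rcases reaches_total hr ht with h1 | h1
    · exact h1
    · exact absurd (reaches_terminal htt h1 ▸ htt) hnt
  have same : ∀ h i, h ∈ Γ.hist → ¬ Γ.Terminal h → Γ.player h = i →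
      (∀ Q : Fin n → Pref n, (∀ j, Q j = A j ∨ Q j = B j) →
        Γ.Reaches (fun j => S j (Q j)) [] h) → S i (A i) h = S i (B i) h := by
    intro h i hh hnt hpl hall
    by_contra hne
    rcases hv i with hAB | ⟨Q, Q', hQ, hQ', hQi, hQi', hpref⟩
    · exact hne (by rw [hAB])
    · have fe := feas Q hQ i h (hall Q hQ) hnt
      have fe' := feas Q' hQ' i h (hall Q' hQ') hnt
      rw [hQi] at fe
      rw [hQi'] at fe'
      have hw := hdom i (A i) (hA i) (S i (B i)) (hval i _ (hB i)) h
        ⟨hh, hnt, hpl, _, fun j => hval j _ (box Q hQ j), by simp only [hQi], hall Q hQ⟩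
        ⟨hh, hnt, hpl, _, fun j => hval j _ (box Q' hQ' j), by simp only [hQi'], hall Q' hQ'⟩
        hne _ _ fe fe'
      exact absurd hpref (not_lt.mpr hw)
  have common : ∀ Q : Fin n → Pref n, (∀ j, Q j = A j ∨ Q j = B j) → ∀ r h,
      Γ.Reaches (fun j => S j (Q j)) r h → r = [] →
      ∀ Q' : Fin n → Pref n, (∀ j, Q' j = A j ∨ Q' j = B j) →
        Γ.Reaches (fun j => S j (Q' j)) [] h := by
    intro Q hQ r h hr
    induction hr with
    | refl => rintro rfl Q' _; exact .refl _
    | @step h' _ h2 h3 ih =>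
      intro hr0 Q' hQ'
      have hsame := same h' _ h2 h3 rfl (ih hr0)
      have e : S (Γ.player h') (Q (Γ.player h')) h' = S (Γ.player h') (Q' (Γ.player h')) h' := by
        rcases hQ (Γ.player h') with e1 | e1 <;> rcases hQ' (Γ.player h') with e2 | e2 <;>
          rw [e1, e2]
        · exact hsame
        · exact hsame.symm
      simp only [e]
      exact .step (ih hr0 Q' hQ') h2 h3
  obtain ⟨t, ht, htt, hto⟩ := hplay P (box P hP)
  obtain ⟨t', ht', htt', hto'⟩ := hplay P' (box P' hP')
  have htP' := common P hP _ t ht rfl P' hP'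
  have : t = t' := by
    rcases reaches_total htP' ht' with h | h
    · exact (reaches_terminal htt h).symm
    · exact reaches_terminal htt' h
  rw [← hto, ← hto', this]

lemma osp_strategyProof {n : ℕ} {D : Set (Pref n)} {f : (Fin n → Pref n) → (Fin n → Fin n)}
    (hosp : OSP D f) : StrategyProof D f := by
  intro P hP i p' hp'
  by_contra hlt
  have hlt : prefers (P i) (f (Function.update P i p') i) (f P i) := not_le.mp hlt
  have h := osp_constant_on_box hosp P (Function.update P i p') hP
    (by
      intro j
      by_cases hj : j = i
      · subst hj; simpa using hp'
      · simpa [hj] using hP j)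
    (by
      intro j
      by_cases hj : j = i
      · subst hj
        exact Or.inr ⟨P, _, fun _ => Or.inl rfl, fun _ => Or.inr rfl, rfl, rfl, hlt⟩
      · left; simp [hj])
    P (Function.update P i p') (fun _ => Or.inl rfl) (fun _ => Or.inr rfl)
  rw [← h] at hlt
  exact lt_irrefl _ hlt

/-! ### Best objects -/

lemma best_spec {n : ℕ} [NeZero n] (p : Pref n) (S : Finset (Fin n)) (hS : S.Nonempty) :
    best p S ∈ S ∧ ∀ y ∈ S, p (best p S) ≤ p y := by
  unfold best
  cases h : S.toList.argmin (fun o => p o) with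
  | none =>
    rw [List.argmin_eq_none, Finset.toList_eq_nil] at h
    exact absurd h hS.ne_empty
  | some m =>
    have hm : m ∈ S.toList.argmin (fun o => p o) := h
    refine ⟨Finset.mem_toList.mp (List.argmin_mem hm), fun y hy => ?_⟩
    exact List.le_of_mem_argmin (Finset.mem_toList.mpr hy) hm

lemma best_eq {n : ℕ} [NeZero n] (p : Pref n) (S : Finset (Fin n)) (x : Fin n) (hx : x ∈ S)
    (h : ∀ y ∈ S, p x ≤ p y) : best p S = x := by
  obtain ⟨h1, h2⟩ := best_spec p S ⟨x, hx⟩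
  exact p.injective (le_antisymm (h2 x hx) (h _ h1))

lemma topObj_ne {n : ℕ} [NeZero n] {p : Pref n} {x y : Fin n} (h : p x < p y) :
    topObj p ≠ y := by
  rintro rfl
  simp [topObj] at h

/-- A preference violating `→(x, y, z)` ranks `x`, `z`, `y` in this order. -/
lemma not_restr {n : ℕ} [NeZero n] {D : Set (Pref n)} {x y z : Fin n} (hxz : x ≠ z) (hyz : y ≠ z)
    (h : ¬ RestrR D x y z) : ∃ p ∈ D, p x < p z ∧ p z < p y := by
  unfold RestrR at h
  push Not at h
  obtain ⟨p, hp, hb, hn⟩ := h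
  have hs := (best_spec p {x, y, z} ⟨x, by simp⟩).2 z (by simp)
  rw [hb] at hs
  have hn : p z ≤ p y := not_lt.mp hn
  exact ⟨p, hp, lt_of_le_of_ne hs (p.injective.ne hxz), lt_of_le_of_ne hn (p.injective.ne hyz.symm)⟩

/-- A preference with the two best objects `x`, `y` ranks any third object below them. -/
lemma top_second_lt {n : ℕ} [NeZero n] (hn : 3 ≤ n) {p : Pref n} {x y z : Fin n}
    (h1 : topObj p = x) (h2 : secondObj p = y) (hzx : z ≠ x) (hzy : z ≠ y) :
    p x < p y ∧ p y < p z := by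
  have hx : p x = 0 := by rw [← h1]; simp [topObj]
  have hy : p y = 1 := by rw [← h2]; simp [secondObj]
  have v1 : ((1 : Fin n) : ℕ) = 1 := by
    rw [Fin.val_one', Nat.mod_eq_of_lt (by omega)]
  have z0 : p z ≠ 0 := by rw [← hx]; exact p.injective.ne hzx
  have z1 : p z ≠ 1 := by rw [← hy]; exact p.injective.ne hzy
  have z0' : (p z : ℕ) ≠ 0 := fun h => z0 (Fin.ext (by simpa using h))
  have z1' : (p z : ℕ) ≠ 1 := fun h => z1 (Fin.ext (by rw [h, v1]))
  rw [hx, hy, Fin.lt_def, Fin.lt_def, v1, Fin.val_zero]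
  omega

/-- Path-connectedness makes every object the top of some preference, so any agent can be null. -/
lemma exists_top {n : ℕ} [NeZero n] {D : Set (Pref n)} (hD : pathConnected D) {x y : Fin n}
    (hxy : x ≠ y) : ∃ p ∈ D, topObj p = x := by
  obtain ⟨l, -, hh, hl, hc⟩ := hD x y hxy
  match l, hh, hl, hc with
  | [u], hh, hl, _ =>
    simp at hh hl
    exact absurd (hh.symm.trans hl) hxy
  | u :: v :: l, hh, _, hc =>
    simp at hh
    subst hh
    obtain ⟨p, hp, _, _, h, _⟩ := (List.isChain_cons_cons.mp hc).1
    exact ⟨p, hp, h⟩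

/-! ### Outcomes when all agents but three are null -/

/-- If all agents outside `{a, b, c}` are null, individual rationality makes `f P` permute
`{a, b, c}`. -/
lemma outcome_mem {n : ℕ} [NeZero n] {D : Set (Pref n)} {f : (Fin n → Pref n) → (Fin n → Fin n)}
    (hrule : IsRule D f) (hir : IndRational D f) {a b c : Fin n} {P : Fin n → Pref n}
    (hP : inD D P) (hnull : ∀ i, i ≠ a → i ≠ b → i ≠ c → topObj (P i) = i) (i : Fin n)
    (hi : i = a ∨ i = b ∨ i = c) : f P i = a ∨ f P i = b ∨ f P i = c := by
  by_contra! h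
  have h1 := hir P hP (f P i)
  have h2 := hnull _ h.1 h.2.1 h.2.2
  have h0 : P (f P i) (f P i) = 0 := ((Equiv.symm_apply_eq _).mp h2).symm
  unfold weakPref at h1
  rw [h0] at h1
  have h3 : P (f P i) (f P (f P i)) = P (f P i) (f P i) := by
    rw [h0]; exact nonpos_iff_eq_zero.mp h1
  have h4 := (hrule P hP).injective ((P (f P i)).injective h3)
  rw [h4] at h
  grind

/-- The outcome at a profile where agent `a` is acclaimed and most prefers `b`: agents `a` and `b`
trade. Equity gives `b` to agent `a`. If agent `b` reports `p2`, agent `a` is still acclaimed and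
takes `b`; as `p2` ranks `c` below `b`, agent `b` must then get `a`. By strategy-proofness agent `b`
gets the favourite `a` under `p1` too. -/
lemma acclaimed_outcome {n : ℕ} [NeZero n] {D : Set (Pref n)}
    {f : (Fin n → Pref n) → (Fin n → Fin n)} (hrule : IsRule D f) (hir : IndRational D f)
    (hsp : StrategyProof D f) (heq : EquityUA D f) {a b c : Fin n} (hab : a ≠ b) (hac : a ≠ c)
    (hbc : b ≠ c) {P : Fin n → Pref n} (hP : inD D P)
    (hnull : ∀ i, i ≠ a → i ≠ b → i ≠ c → topObj (P i) = i)
    {qb p1 p2 : Pref n} (hp2 : p2 ∈ D) (Pa : P a = qb) (Pb : P b = p1) (Pc : P c = p2)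
    (qb1 : qb b < qb c) (qb2 : qb c < qb a) (p11 : p1 a < p1 c) (p12 : p1 c < p1 b)
    (p21 : p2 a < p2 b) (p22 : p2 b < p2 c) : f P b = a ∧ f P c = c := by
  have key : ∀ Q : Fin n → Pref n, inD D Q →
      (∀ i, i ≠ a → i ≠ b → i ≠ c → topObj (Q i) = i) → Q a = qb → Q c = p2 →
      Q b a < Q b b → Q b a < Q b c → f Q a = b := by
    intro Q hQ hn Qa Qc Q1 Q2
    have hact : activeAgents Q = {a, b, c} := by
      ext i
      simp only [activeAgents, Finset.mem_filter, Finset.mem_univ, true_and, Finset.mem_insert,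
        Finset.mem_singleton]
      constructor
      · intro h
        by_contra! h'
        exact h (hn i h'.1 h'.2.1 h'.2.2)
      · rintro (rfl | rfl | rfl)
        · rw [Qa]; exact topObj_ne qb2
        · exact topObj_ne Q1
        · rw [Qc]; exact topObj_ne p22
    have hbest : best (Q a) {a, b, c} = b := by
      apply best_eq
      · simp
      · rw [Qa]; simp [qb1.le, (qb1.trans qb2).le]
    have hacc : acclaimed Q a := by
      refine ⟨?_, ?_, ?_, ?_⟩
      · rw [hact, Finset.card_eq_three.mpr ⟨a, b, c, hab, hac, hbc, rfl⟩]; norm_num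
      · rw [hact]; simp
      · rw [hact, hbest]; exact hab.symm
      · rw [hact]
        intro j hj hja
        apply best_eq
        · simp
        · simp only [Finset.mem_insert, Finset.mem_singleton] at hj
          rcases hj with rfl | rfl | rfl
          · exact absurd rfl hja
          · simp [Q1.le, Q2.le]
          · rw [Qc]; simp [p21.le, (p21.trans p22).le]
    rw [heq Q hQ a hacc, hact, hbest]
  have ha : f P a = b := key P hP hnull Pa Pc (by rw [Pb]; exact p11.trans p12)
    (by rw [Pb]; exact p11)
  set Q := Function.update P b p2 with hQdef
  have Qb : Q b = p2 := by simp [hQdef]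
  have Qne : ∀ i, i ≠ b → Q i = P i := fun i hi => by simp [hQdef, hi]
  have hQ : inD D Q := by
    intro i
    by_cases hi : i = b
    · subst hi; rw [Qb]; exact hp2
    · rw [Qne i hi]; exact hP i
  have hQn : ∀ i, i ≠ a → i ≠ b → i ≠ c → topObj (Q i) = i := by
    intro i h1 h2 h3
    rw [Qne i h2]; exact hnull i h1 h2 h3
  have hQa : f Q a = b := key Q hQ hQn (by rw [Qne a hab, Pa]) (by rw [Qne c hbc.symm, Pc])
    (by rw [Qb]; exact p21) (by rw [Qb]; exact p21.trans p22)
  have hQb : f Q b = a := by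
    have h1 := hir Q hQ b
    have h2 : f Q b ≠ b := fun h => hab ((hrule Q hQ).injective (hQa.trans h.symm))
    rcases outcome_mem hrule hir hQ hQn b (by simp) with h | h | h
    · exact h
    · exact absurd h h2
    · rw [h, weakPref, Qb] at h1
      exact absurd p22 (not_lt.mpr h1)
  have hPb : f P b = a := by
    have h1 := hsp P hP b p2 hp2
    rw [← hQdef, hQb, weakPref, Pb] at h1
    rcases outcome_mem hrule hir hP hnull b (by simp) with h | h | h
    · exact h
    · rw [h] at h1; exact absurd (p11.trans p12) (not_lt.mpr h1)
    · rw [h] at h1; exact absurd p11 (not_lt.mpr h1)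
  refine ⟨hPb, ?_⟩
  rcases outcome_mem hrule hir hP hnull c (by simp) with h | h | h
  · exact absurd ((hrule P hP).injective (hPb.trans h.symm)) hbc
  · exact absurd ((hrule P hP).injective (ha.trans h.symm)) hac
  · exact h

/-- If agents `b` and `c` rank each other's object first and their own second, they trade, and
agent `a` keeps `a`: otherwise both keep their endowments and trading is an improvement. -/
lemma trade_outcome {n : ℕ} [NeZero n] {D : Set (Pref n)}
    {f : (Fin n → Pref n) → (Fin n → Fin n)} (hrule : IsRule D f) (heff : Efficient D f)
    (hir : IndRational D f) {a b c : Fin n} (hab : a ≠ b) (hac : a ≠ c)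
    (hbc : b ≠ c) {P : Fin n → Pref n} (hP : inD D P)
    (hnull : ∀ i, i ≠ a → i ≠ b → i ≠ c → topObj (P i) = i)
    (b1 : P b c < P b b) (b2 : P b b < P b a) (c1 : P c b < P c c) (c2 : P c c < P c a) :
    f P a = a ∧ f P b = c ∧ f P c = b := by
  have inj := (hrule P hP).injective
  have hb := hir P hP b
  have hc := hir P hP c
  unfold weakPref at hb hc
  have hb' : f P b = b ∨ f P b = c := by
    rcases outcome_mem hrule hir hP hnull b (by simp) with h | h | h
    · rw [h] at hb; exact absurd b2 (not_lt.mpr hb)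
    · exact Or.inl h
    · exact Or.inr h
  have hc' : f P c = b ∨ f P c = c := by
    rcases outcome_mem hrule hir hP hnull c (by simp) with h | h | h
    · rw [h] at hc; exact absurd c2 (not_lt.mpr hc)
    · exact Or.inl h
    · exact Or.inr h
  have hbne : f P b ≠ b := by
    intro hbb
    have hcc : f P c = c := by
      rcases hc' with h | h
      · exact absurd (inj (hbb.trans h.symm)) hbc
      · exact h
    refine heff P hP ⟨f P ∘ Equiv.swap b c, (hrule P hP).comp (Equiv.bijective _), ?_, b, ?_⟩
    · intro i
      by_cases hib : i = b
      · subst hib; simp [weakPref, hbb, hcc, b1.le]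
      · by_cases hic : i = c
        · subst hic; simp [weakPref, hbb, hcc, c1.le]
        · simp [weakPref, Equiv.swap_apply_of_ne_of_ne hib hic]
    · simp [prefers, hbb, hcc, b1]
  have hbc' : f P b = c := hb'.resolve_left hbne
  have hcb : f P c = b := hc'.resolve_right fun h => hbc (inj (hbc'.trans h.symm))
  refine ⟨?_, hbc', hcb⟩
  rcases outcome_mem hrule hir hP hnull a (by simp) with h | h | h
  · exact h
  · exact absurd (inj (h.trans hcb.symm)) hac
  · exact absurd (inj (h.trans hbc'.symm)) hab

theorem local_restriction (n : ℕ) [NeZero n] (hn : 3 ≤ n) (D : Set (Pref n))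
    (hrich : richDomain D) (f : (Fin n → Pref n) → (Fin n → Fin n))
    (hrule : IsRule D f) (heff : Efficient D f) (hir : IndRational D f)
    (hosp : OSP D f) (hequity : EquityUA D f)
    (oj ok oi : Fin n) (hjk : oj ≠ ok) (hconn : connectedObj D oj ok)
    (hij : oi ≠ oj) (hik : oi ≠ ok) :
    RestrR D oi oj ok ∨ RestrR D oi ok oj := by
  obtain ⟨qb, hqb, qc, hqc, tb, sb, tc, sc⟩ := hconn
  by_contra! hcon
  -- `p1` restricts to `a c b` and `p2` to `a b c`.
  obtain ⟨p1, hp1, p11, p12⟩ := not_restr hik hjk hcon.1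
  obtain ⟨p2, hp2, p21, p22⟩ := not_restr hij hjk.symm hcon.2
  obtain ⟨qb1, qb2⟩ := top_second_lt hn tb sb hij hik
  obtain ⟨qc1, qc2⟩ := top_second_lt hn tc sc hik hij
  have hsp := osp_strategyProof hosp
  have hN : ∀ x : Fin n, ∃ p ∈ D, topObj p = x := by
    intro x
    by_cases hx : x = oi
    · exact exists_top hrich.1 (hx ▸ hij)
    · exact exists_top hrich.1 hx
  choose N hND hNt using hN
  let T : Pref n → Pref n → Pref n → Fin n → Pref n := fun x y z i =>
    if i = oi then x else if i = oj then y else if i = ok then z else N i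
  have Ta : ∀ x y z, T x y z oi = x := fun x y z => by simp [T]
  have Tb : ∀ x y z, T x y z oj = y := fun x y z => by simp [T, hij.symm]
  have Tc : ∀ x y z, T x y z ok = z := fun x y z => by simp [T, hik.symm, hjk.symm]
  have Tn : ∀ x y z i, i ≠ oi → i ≠ oj → i ≠ ok → T x y z i = N i :=
    fun x y z i h1 h2 h3 => by simp [T, h1, h2, h3]
  have Tnull : ∀ x y z i, i ≠ oi → i ≠ oj → i ≠ ok → topObj (T x y z i) = i :=
    fun x y z i h1 h2 h3 => by rw [Tn x y z i h1 h2 h3, hNt]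
  have TD : ∀ x ∈ D, ∀ y ∈ D, ∀ z ∈ D, inD D (T x y z) := by
    intro x hx y hy z hz i
    simp only [T]
    split_ifs
    exacts [hx, hy, hz, hND i]
  obtain ⟨-, e1c⟩ := acclaimed_outcome hrule hir hsp hequity hij hik hjk
    (TD qb hqb p1 hp1 p2 hp2) (Tnull _ _ _) hp2 (Ta _ _ _) (Tb _ _ _) (Tc _ _ _)
    qb1 qb2 p11 p12 p21 p22
  obtain ⟨e2c, e2b⟩ := acclaimed_outcome hrule hir hsp hequity hik hij hjk.symm
    (TD qc hqc p1 hp1 p2 hp2) (fun i h1 h2 h3 => Tnull _ _ _ i h1 h3 h2) hp1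
    (Ta _ _ _) (Tc _ _ _) (Tb _ _ _) qc1 qc2 p21 p22 p11 p12
  have e2a : f (T qc p1 p2) oi = ok := by
    have inj := (hrule _ (TD qc hqc p1 hp1 p2 hp2)).injective
    rcases outcome_mem hrule hir (TD qc hqc p1 hp1 p2 hp2) (Tnull _ _ _) oi (by simp)
      with h | h | h
    · exact absurd (inj (h.trans e2c.symm)) hik
    · exact absurd (inj (h.trans e2b.symm)) hij
    · exact h
  obtain ⟨e3a, e3b, e3c⟩ := trade_outcome hrule heff hir hij hik hjk
    (TD qb hqb qc hqc qb hqb) (Tnull _ _ _)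
    (by rw [Tb]; exact qc1) (by rw [Tb]; exact qc2) (by rw [Tc]; exact qb1)
    (by rw [Tc]; exact qb2)
  -- A profile built from coordinates of the two corners of the box lies in the box.
  have box : ∀ x y z, (x = qb ∨ x = qc) → (y = p1 ∨ y = qc) → (z = p2 ∨ z = qb) →
      ∀ j, T x y z j = T qb p1 p2 j ∨ T x y z j = T qc qc qb j := by
    intro x y z hx hy hz j
    simp only [T]
    split_ifs
    exacts [hx, hy, hz, Or.inl rfl]
  have b1 := box qb p1 p2 (.inl rfl) (.inl rfl) (.inl rfl)
  have b2 := box qc p1 p2 (.inr rfl) (.inl rfl) (.inl rfl)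
  have b3 := box qb qc qb (.inl rfl) (.inr rfl) (.inr rfl)
  have hconst := osp_constant_on_box hosp (T qb p1 p2) (T qc qc qb)
    (TD qb hqb p1 hp1 p2 hp2) (TD qc hqc qc hqc qb hqb) (by
      intro i
      by_cases h1 : i = oi
      · subst h1
        refine Or.inr ⟨_, _, b3, b2, by simp only [Ta], by simp only [Ta], ?_⟩
        rw [e3a, e2a, Ta]; exact qb2
      by_cases h2 : i = oj
      · subst h2
        refine Or.inr ⟨_, _, b2, b3, by simp only [Tb], by simp only [Tb], ?_⟩
        rw [e3b, e2b, Tb]; exact p12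
      by_cases h3 : i = ok
      · subst h3
        refine Or.inr ⟨_, _, b1, b3, by simp only [Tc], by simp only [Tc], ?_⟩
        rw [e1c, e3c, Tc]; exact p22
      · left; rw [Tn _ _ _ i h1 h2 h3, Tn _ _ _ i h1 h2 h3]) _ _ b2 b3
  exact hik (e3a.symm.trans ((congrFun hconst oi).symm.trans e2a))
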